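/- arXiv:2601.05557 — 4 statements merged into one kernel-verified Lean document; each statement's English description precedes it below -/
import Mathlib

section
/- Define the uniform (Chebyshev) loss p(w) = max_{1 ≤ i ≤ N} | f_i − ( Σ_{j=1}^n max{0, ⟨a_j, T_i⟩} − Σ_{j=1}^n max{0, ⟨b_j, T_i⟩} ) |, and define G(w) = max_{1 ≤ i ≤ N} ( g_i(w) + Σ_{j ≠ i} h_j(w) ) and H(w) = Σ_{j=1}^N h_j(w). Then G and H are convex on ℝ^{2nd} and p(w) = G(w) − H(w) for every w; in particular p is a DC function. -/
open scoped RealInnerProductSpace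

/-- The weight space `ℝ^{2nd}`: `n` vectors `a_j ∈ ℝ^d` and `n` vectors `b_j ∈ ℝ^d`. -/
abbrev Wt (d n : ℕ) := (Fin n → EuclideanSpace ℝ (Fin d)) × (Fin n → EuclideanSpace ℝ (Fin d))

/-- `h_i(w) = ∑_j max{0, ⟨a_j, T_i⟩} + ∑_j max{0, ⟨b_j, T_i⟩}`. -/
noncomputable def hFun {d n N : ℕ} (T : Fin N → EuclideanSpace ℝ (Fin d))
    (i : Fin N) (w : Wt d n) : ℝ :=
  (∑ j, max 0 ⟪w.1 j, T i⟫) + ∑ j, max 0 ⟪w.2 j, T i⟫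

/-- `g_i(w) = max{ f_i + 2 ∑_j max{0, ⟨b_j, T_i⟩}, 2 ∑_j max{0, ⟨a_j, T_i⟩} - f_i }`. -/
noncomputable def gFun {d n N : ℕ} (T : Fin N → EuclideanSpace ℝ (Fin d))
    (f : Fin N → ℝ) (i : Fin N) (w : Wt d n) : ℝ :=
  max (f i + 2 * ∑ j, max 0 ⟪w.2 j, T i⟫)
      (2 * (∑ j, max 0 ⟪w.1 j, T i⟫) - f i)

/-!
Up to adding `u + v`, the error `|y - (u - v)|` of a difference `u - v` of convex functions is a
maximum of two convex functions: `|y - (u - v)| + (u + v) = max (y + 2 * v) (2 * u - y)`. Adding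
the sum of `u j + v j` over all data points `j` therefore makes every error convex, and since this
sum does not depend on `i` it can be pulled out of the maximum over `i`.
-/

section ConvexOn

variable {𝕜 E β ι : Type*} [Semiring 𝕜] [PartialOrder 𝕜] [AddCommMonoid E] [SMul 𝕜 E]
  [AddCommMonoid β] [Module 𝕜 β] {s : Set E} {t : Finset ι} {F : ι → E → β}

theorem convexOn_finset_sum [PartialOrder β] [IsOrderedAddMonoid β] (hs : Convex 𝕜 s)
    (hF : ∀ i ∈ t, ConvexOn 𝕜 s (F i)) : ConvexOn 𝕜 s fun x ↦ ∑ i ∈ t, F i x := by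
  simpa only [Finset.sum_fn] using
    Finset.sum_induction F (ConvexOn 𝕜 s) (fun _ _ ↦ ConvexOn.add) (convexOn_const 0 hs) hF

theorem convexOn_finset_sup' [LinearOrder β] [IsOrderedAddMonoid β] [PosSMulStrictMono 𝕜 β]
    (ht : t.Nonempty) (hF : ∀ i ∈ t, ConvexOn 𝕜 s (F i)) :
    ConvexOn 𝕜 s fun x ↦ t.sup' ht fun i ↦ F i x := by
  simpa only [← Finset.sup'_apply] using
    Finset.sup'_induction ht F (p := ConvexOn 𝕜 s) (fun _ hf _ hg ↦ hf.sup hg) hF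

end ConvexOn

theorem convexOn_sum_max_zero_inner {κ V : Type*} [Fintype κ] [SeminormedAddCommGroup V]
    [InnerProductSpace ℝ V] (x : V) :
    ConvexOn ℝ Set.univ fun a : κ → V ↦ ∑ j, max 0 ⟪a j, x⟫ :=
  convexOn_finset_sum convex_univ fun j _ ↦ (convexOn_const 0 convex_univ).sup <|
    ((innerₗ V).flip x ∘ₗ (LinearMap.proj j : (κ → V) →ₗ[ℝ] V)).convexOn convex_univ

section DifferenceOfConvex

variable {𝕜 E ι : Type*} [CommRing 𝕜] [LinearOrder 𝕜] [IsStrictOrderedRing 𝕜]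

theorem max_add_two_mul_two_mul_sub (y u v : 𝕜) :
    max (y + 2 * v) (2 * u - y) = |y - (u - v)| + (u + v) := by
  rw [abs_eq_max_neg, ← max_add_add_right]
  congr 1 <;> ring

theorem sup'_max_add_sum_erase [DecidableEq ι] {t : Finset ι} (ht : t.Nonempty) (y u v : ι → 𝕜) :
    (t.sup' ht fun i ↦ max (y i + 2 * v i) (2 * u i - y i) + ∑ j ∈ t.erase i, (u j + v j)) =
      (t.sup' ht fun i ↦ |y i - (u i - v i)|) + ∑ j ∈ t, (u j + v j) := by
  rw [Finset.sup'_add]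
  refine Finset.sup'_congr ht rfl fun i hi ↦ ?_
  rw [max_add_two_mul_two_mul_sub, add_assoc, Finset.add_sum_erase t (fun j ↦ u j + v j) hi]

variable [AddCommMonoid E] [SMul 𝕜 E] {s : Set E}

theorem convexOn_max_add_two_mul_two_mul_sub {u v : E → 𝕜} (hu : ConvexOn 𝕜 s u)
    (hv : ConvexOn 𝕜 s v) (y : 𝕜) :
    ConvexOn 𝕜 s fun x ↦ max (y + 2 * v x) (2 * u x - y) :=
  ((convexOn_const y hv.1).add (hv.smul zero_le_two)).sup
    ((hu.smul zero_le_two).sub (concaveOn_const y hu.1))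

theorem stmt_4_general [DecidableEq ι] {t : Finset ι} (ht : t.Nonempty) (y : ι → 𝕜)
    {u v : ι → E → 𝕜} (hu : ∀ i ∈ t, ConvexOn 𝕜 s (u i)) (hv : ∀ i ∈ t, ConvexOn 𝕜 s (v i)) :
    ConvexOn 𝕜 s (fun x ↦ t.sup' ht fun i ↦
      max (y i + 2 * v i x) (2 * u i x - y i) + ∑ j ∈ t.erase i, (u j x + v j x)) ∧
    ConvexOn 𝕜 s (fun x ↦ ∑ j ∈ t, (u j x + v j x)) ∧
    ∀ x, (t.sup' ht fun i ↦ |y i - (u i x - v i x)|) =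
      (t.sup' ht fun i ↦
        max (y i + 2 * v i x) (2 * u i x - y i) + ∑ j ∈ t.erase i, (u j x + v j x)) -
      ∑ j ∈ t, (u j x + v j x) := by
  have convex_s : Convex 𝕜 s := ht.elim fun i hi ↦ (hu i hi).1
  have convex_add : ∀ i ∈ t, ConvexOn 𝕜 s fun x ↦ u i x + v i x :=
    fun i hi ↦ (hu i hi).add (hv i hi)
  refine ⟨convexOn_finset_sup' ht fun i hi ↦ ?_, convexOn_finset_sum convex_s convex_add,
    fun x ↦ eq_sub_of_add_eq (sup'_max_add_sum_erase ht y (u · x) (v · x)).symm⟩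
  exact (convexOn_max_add_two_mul_two_mul_sub (hu i hi) (hv i hi) (y i)).add
    (convexOn_finset_sum convex_s fun j hj ↦ convex_add j (Finset.mem_of_mem_erase hj))

end DifferenceOfConvex

/-- the uniform (Chebyshev) loss
`p(w) = max_i |f_i - (∑_j max{0,⟨a_j,T_i⟩} - ∑_j max{0,⟨b_j,T_i⟩})|`
equals `G - H` where `G(w) = max_i (g_i(w) + ∑_{j ≠ i} h_j(w))` and
`H(w) = ∑_j h_j(w)` are convex; in particular `p` is DC. -/
theorem stmt_4 (d n N : ℕ) (hd : 0 < d) (hn : 0 < n) (hN : 0 < N)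
    (T : Fin N → EuclideanSpace ℝ (Fin d)) (f : Fin N → ℝ) :
    ConvexOn ℝ Set.univ (fun w : Wt d n =>
        Finset.univ.sup' (Finset.univ_nonempty_iff.mpr ⟨⟨0, hN⟩⟩)
          (fun i => gFun T f i w + ∑ j ∈ Finset.univ.erase i, hFun T j w)) ∧
    ConvexOn ℝ Set.univ (fun w : Wt d n => ∑ j, hFun T j w) ∧
    ∀ w : Wt d n,
      Finset.univ.sup' (Finset.univ_nonempty_iff.mpr ⟨⟨0, hN⟩⟩)
          (fun i => |f i - ((∑ j, max 0 ⟪w.1 j, T i⟫) - ∑ j, max 0 ⟪w.2 j, T i⟫)|) =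
        Finset.univ.sup' (Finset.univ_nonempty_iff.mpr ⟨⟨0, hN⟩⟩)
          (fun i => gFun T f i w + ∑ j ∈ Finset.univ.erase i, hFun T j w)
        - ∑ j, hFun T j w :=
  stmt_4_general _ f
    (fun i _ ↦ (convexOn_sum_max_zero_inner (T i)).comp_linearMap (LinearMap.fst ℝ _ _))
    (fun i _ ↦ (convexOn_sum_max_zero_inner (T i)).comp_linearMap (LinearMap.snd ℝ _ _))
end

section
/- Let g, h : ℝ^m → ℝ be convex and set F = g − h. Let x ∈ ℝ^m, let y be a subgradient of h at x (i.e. h(x') ≥ h(x) + ⟨y, x' − x⟩ for all x'), and let x⁺ ∈ ℝ^m be a minimiser of the convex function u ↦ g(u) − ⟨y, u⟩ over ℝ^m. Then F(x⁺) ≤ F(x); that is, one iteration of the generic DCA does not increase the DC objective. -/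
open scoped RealInnerProductSpace

/-!
A subgradient `φ` of `h` at `x` is the same as a functional for which `x` minimises `h - φ`, while
`x'` minimises `g - φ` by choice. Both minimality statements compare `x` with `x'`, and `φ` cancels
in `g - h = (g - φ) - (h - φ)`.
-/

section

variable {E α : Type*} [AddCommGroup α] [PartialOrder α] [IsOrderedAddMonoid α]

theorem sub_le_sub_of_isMinOn_sub {s : Set E} {g h φ : E → α} {x x' : E} (hx : x ∈ s) (hx' : x' ∈ s)
    (hh : IsMinOn (fun u ↦ h u - φ u) s x) (hg : IsMinOn (fun u ↦ g u - φ u) s x') :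
    g x' - h x' ≤ g x - h x :=
  calc
    g x' - h x' = (g x' - φ x') - (h x' - φ x') := (sub_sub_sub_cancel_right _ _ _).symm
    _ ≤ (g x - φ x) - (h x - φ x) := sub_le_sub (hg hx) (hh hx')
    _ = g x - h x := sub_sub_sub_cancel_right _ _ _

variable [AddCommGroup E]

theorem isMinOn_sub_iff_add_map_sub_le {s : Set E} {h : E → α} {φ : E →+ α} {x : E} :
    IsMinOn (fun u ↦ h u - φ u) s x ↔ ∀ u ∈ s, h x + φ (u - x) ≤ h u := by
  refine isMinOn_iff.trans (forall₂_congr fun u _ ↦ ?_)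
  rw [le_sub_iff_add_le, map_sub, sub_add_eq_add_sub, add_sub_assoc]

theorem stmt_11_general {s : Set E} {g h : E → α} (φ : E →+ α) {x x' : E} (hx : x ∈ s)
    (hx' : x' ∈ s) (hφ : ∀ u ∈ s, h x + φ (u - x) ≤ h u)
    (hmin : IsMinOn (fun u ↦ g u - φ u) s x') :
    g x' - h x' ≤ g x - h x :=
  sub_le_sub_of_isMinOn_sub hx hx' (isMinOn_sub_iff_add_map_sub_le.mpr hφ) hmin

end

/-- one iteration of the generic DCA does not increase the DC
objective `F = g - h`: if `y` is a subgradient of `h` at `x` and `x⁺` minimises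
`u ↦ g(u) - ⟨y, u⟩` over `ℝ^m`, then `F(x⁺) ≤ F(x)`. -/
theorem stmt_11 (m : ℕ) (g h : EuclideanSpace ℝ (Fin m) → ℝ)
    (hg : ConvexOn ℝ Set.univ g) (hh : ConvexOn ℝ Set.univ h)
    (x y xplus : EuclideanSpace ℝ (Fin m))
    (hy : ∀ x' : EuclideanSpace ℝ (Fin m), h x' ≥ h x + ⟪y, x' - x⟫)
    (hmin : ∀ u : EuclideanSpace ℝ (Fin m), g xplus - ⟪y, xplus⟫ ≤ g u - ⟪y, u⟫) :
    g xplus - h xplus ≤ g x - h x :=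
  stmt_11_general (innerₗ _ y).toAddMonoidHom (Set.mem_univ x) (Set.mem_univ xplus)
    (fun u _ ↦ hy u) (isMinOn_univ_iff.mpr hmin)
end

section
/- Fix 0 < α < 1 and let σ_α(x) = max{αx, x}. For each i = 1, …, N define h_i^α(w) = Σ_{j=1}^n σ_α(⟨a_j, T_i⟩) + Σ_{j=1}^n σ_α(⟨b_j, T_i⟩) and g_i^α(w) = max{ f_i + 2 Σ_{j=1}^n σ_α(⟨b_j, T_i⟩), 2 Σ_{j=1}^n σ_α(⟨a_j, T_i⟩) − f_i }. Then g_i^α and h_i^α are convex on ℝ^{2nd}, and for every w, g_i^α(w) − h_i^α(w) = | f_i − ( Σ_{j=1}^n σ_α(⟨a_j, T_i⟩) − Σ_{j=1}^n σ_α(⟨b_j, T_i⟩) ) |. -/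
open scoped RealInnerProductSpace

/- If `A` and `B` are convex, then `|c - (A - B)|` is again a difference of convex functions:
adding `A + B` to both entries of `max (c - (A - B)) (-(c - (A - B)))` turns them into `c + 2 * B`
and `2 * A - c`, which are convex. Here `A` and `B` are sums of a convex activation composed with
linear forms in the weights. -/

section ConvexFunctions

variable {𝕜 E β ι : Type*}

theorem convexOn_finsetSum [Semiring 𝕜] [PartialOrder 𝕜] [AddCommMonoid E] [AddCommMonoid β]
    [PartialOrder β] [IsOrderedAddMonoid β] [SMul 𝕜 E] [Module 𝕜 β] {s : Set E}
    (hs : Convex 𝕜 s) {u : Finset ι} {f : ι → E → β} (hf : ∀ j ∈ u, ConvexOn 𝕜 s (f j)) :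
    ConvexOn 𝕜 s (fun x => ∑ j ∈ u, f j x) := by
  simpa only [← Finset.sum_apply] using
    Finset.sum_induction f (ConvexOn 𝕜 s) (fun _ _ => ConvexOn.add) (convexOn_const 0 hs) hf

variable [CommRing 𝕜] [LinearOrder 𝕜] [IsStrictOrderedRing 𝕜]

theorem convexOn_max_add_two_mul_two_mul_sub_s12 [AddCommMonoid E] [SMul 𝕜 E] {s : Set E}
    {A B : E → 𝕜} (hA : ConvexOn 𝕜 s A) (hB : ConvexOn 𝕜 s B) (c : 𝕜) :
    ConvexOn 𝕜 s (fun x => max (c + 2 * B x) (2 * A x - c)) := by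
  have left_convex : ConvexOn 𝕜 s (fun x => c + 2 * B x) :=
    (convexOn_const c hB.1).add (hB.smul zero_le_two)
  have right_convex : ConvexOn 𝕜 s (fun x => 2 * A x - c) :=
    (hA.smul zero_le_two).sub (concaveOn_const c hA.1)
  exact left_convex.sup right_convex

theorem convexOn_sum_comp_linearMap [AddCommMonoid E] [Module 𝕜 E] {φ : 𝕜 → 𝕜}
    (hφ : ConvexOn 𝕜 Set.univ φ) (u : Finset ι) (p : ι → E →ₗ[𝕜] 𝕜) :
    ConvexOn 𝕜 Set.univ (fun x => ∑ j ∈ u, φ (p j x)) :=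
  convexOn_finsetSum convex_univ fun j _ => hφ.comp_linearMap (p j)

end ConvexFunctions

theorem max_add_two_mul_sub_add_eq_abs {R : Type*} [CommRing R] [LinearOrder R]
    [IsOrderedAddMonoid R] (A B c : R) : max (c + 2 * B) (2 * A - c) - (A + B) = |c - (A - B)| := by
  rw [abs_eq_max_neg, ← max_sub_sub_right]
  congr 1 <;> ring

/-- The Leaky ReLU activation `σ_α`, the function applied to each pre-activation of the network;
for `α ≤ 1` the parameter is its slope on the negative inputs. -/
def leakyReLU {R : Type*} [Mul R] [Max R] (α x : R) : R :=
  max (α * x) x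

theorem convexOn_leakyReLU {𝕜 : Type*} [CommRing 𝕜] [LinearOrder 𝕜] [IsStrictOrderedRing 𝕜]
    (α : 𝕜) : ConvexOn 𝕜 Set.univ (leakyReLU α) :=
  ((LinearMap.mulLeft 𝕜 α).convexOn convex_univ).sup (convexOn_id convex_univ)

theorem stmt_12_general {𝕜 W ι κ : Type*} [CommRing 𝕜] [LinearOrder 𝕜] [IsStrictOrderedRing 𝕜]
    [AddCommMonoid W] [Module 𝕜 W] [Fintype ι] [Fintype κ] {φ : 𝕜 → 𝕜}
    (hφ : ConvexOn 𝕜 Set.univ φ) (p : ι → W →ₗ[𝕜] 𝕜) (q : κ → W →ₗ[𝕜] 𝕜) (c : 𝕜) :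
    ConvexOn 𝕜 Set.univ (fun w => max (c + 2 * ∑ k, φ (q k w)) (2 * (∑ j, φ (p j w)) - c)) ∧
    ConvexOn 𝕜 Set.univ (fun w => (∑ j, φ (p j w)) + ∑ k, φ (q k w)) ∧
    ∀ w, max (c + 2 * ∑ k, φ (q k w)) (2 * (∑ j, φ (p j w)) - c)
        - ((∑ j, φ (p j w)) + ∑ k, φ (q k w)) =
      |c - ((∑ j, φ (p j w)) - ∑ k, φ (q k w))| := by
  have hp := convexOn_sum_comp_linearMap hφ Finset.univ p
  have hq := convexOn_sum_comp_linearMap hφ Finset.univ q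
  exact ⟨convexOn_max_add_two_mul_two_mul_sub_s12 hp hq c, hp.add hq,
    fun _ => max_add_two_mul_sub_add_eq_abs _ _ c⟩

/-- Leaky ReLU, `σ_α(x) = max{αx, x}`: the functions
`h_i^α(w) = ∑_j σ_α(⟨a_j,T_i⟩) + ∑_j σ_α(⟨b_j,T_i⟩)` and
`g_i^α(w) = max{f_i + 2∑_j σ_α(⟨b_j,T_i⟩), 2∑_j σ_α(⟨a_j,T_i⟩) - f_i}` are convex,
and `g_i^α(w) - h_i^α(w) = |f_i - (∑_j σ_α(⟨a_j,T_i⟩) - ∑_j σ_α(⟨b_j,T_i⟩))|`. -/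
theorem stmt_12 (d n N : ℕ) (hd : 0 < d) (hn : 0 < n) (hN : 0 < N)
    (α : ℝ) (hα0 : 0 < α) (hα1 : α < 1)
    (T : Fin N → EuclideanSpace ℝ (Fin d)) (f : Fin N → ℝ) (i : Fin N) :
    ConvexOn ℝ Set.univ (fun w : Wt d n =>
      max (f i + 2 * ∑ j, max (α * ⟪w.2 j, T i⟫) ⟪w.2 j, T i⟫)
          (2 * (∑ j, max (α * ⟪w.1 j, T i⟫) ⟪w.1 j, T i⟫) - f i)) ∧
    ConvexOn ℝ Set.univ (fun w : Wt d n =>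
      (∑ j, max (α * ⟪w.1 j, T i⟫) ⟪w.1 j, T i⟫) +
      ∑ j, max (α * ⟪w.2 j, T i⟫) ⟪w.2 j, T i⟫) ∧
    ∀ w : Wt d n,
      max (f i + 2 * ∑ j, max (α * ⟪w.2 j, T i⟫) ⟪w.2 j, T i⟫)
          (2 * (∑ j, max (α * ⟪w.1 j, T i⟫) ⟪w.1 j, T i⟫) - f i)
        - ((∑ j, max (α * ⟪w.1 j, T i⟫) ⟪w.1 j, T i⟫) +
           ∑ j, max (α * ⟪w.2 j, T i⟫) ⟪w.2 j, T i⟫) =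
      |f i - ((∑ j, max (α * ⟪w.1 j, T i⟫) ⟪w.1 j, T i⟫) -
              ∑ j, max (α * ⟪w.2 j, T i⟫) ⟪w.2 j, T i⟫)| := by
  let ℓ : EuclideanSpace ℝ (Fin d) →ₗ[ℝ] ℝ := (innerₗ _).flip (T i)
  let p (j : Fin n) : Wt d n →ₗ[ℝ] ℝ := ℓ ∘ₗ .proj j ∘ₗ .fst ℝ _ _
  let q (j : Fin n) : Wt d n →ₗ[ℝ] ℝ := ℓ ∘ₗ .proj j ∘ₗ .snd ℝ _ _
  exact stmt_12_general (convexOn_leakyReLU α) p q (f i)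
end

section
/- Define the Manhattan (L1) loss p₁(w) = Σ_{i=1}^N | f_i − ( Σ_{j=1}^n max{0, ⟨a_j, T_i⟩} − Σ_{j=1}^n max{0, ⟨b_j, T_i⟩} ) |. Then p₁(w) = ( Σ_{i=1}^N g_i(w) ) − ( Σ_{i=1}^N h_i(w) ) for every w ∈ ℝ^{2nd}, and both Σ_{i=1}^N g_i and Σ_{i=1}^N h_i are convex on ℝ^{2nd}; in particular the L1 loss of the two-group ReLU network is a DC function. -/
/-!
Writing `A` and `B` for the two groups of ReLU units at a data point, `|f - (A - B)|` is the maximum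
of `f - (A - B)` and `(A - B) - f`. Adding the convex function `A + B` cancels the negative
occurrence of `A` or `B` in each branch, leaving a maximum of two convex functions.
-/

open scoped RealInnerProductSpace

section OrderedModule

variable {𝕜 E β ι : Type*} [Semiring 𝕜] [PartialOrder 𝕜] [AddCommMonoid E] [SMul 𝕜 E]
  [AddCommMonoid β] [PartialOrder β] [IsOrderedAddMonoid β] [Module 𝕜 β]

theorem convexOn_sum {s : Set E} (hs : Convex 𝕜 s) {t : Finset ι} {F : ι → E → β}
    (hF : ∀ i ∈ t, ConvexOn 𝕜 s (F i)) : ConvexOn 𝕜 s (fun x => ∑ i ∈ t, F i x) := by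
  simpa only [Finset.sum_fn] using Finset.sum_induction F (ConvexOn 𝕜 s)
    (fun _ _ hf hg => hf.add hg) (convexOn_const 0 hs) hF

end OrderedModule

section OrderedRing

variable {𝕜 E ι : Type*} [CommRing 𝕜] [LinearOrder 𝕜] [IsStrictOrderedRing 𝕜]

theorem abs_sub_sub_eq_max_sub_add (y a b : 𝕜) :
    |y - (a - b)| = max (y + 2 * b) (2 * a - y) - (a + b) := by
  rw [abs_eq_max_neg, ← max_sub_sub_right]
  congr 1 <;> ring

variable [AddCommMonoid E] [Module 𝕜 E] {s : Set E}

theorem convexOn_max_add_two_mul_sub {A B : E → 𝕜} (hA : ConvexOn 𝕜 s A) (hB : ConvexOn 𝕜 s B)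
    (y : 𝕜) : ConvexOn 𝕜 s (fun x => max (y + 2 * B x) (2 * A x - y)) := by
  have h_left : ConvexOn 𝕜 s (fun x => y + 2 * B x) :=
    (convexOn_const y hB.1).add (hB.smul zero_le_two)
  have h_right : ConvexOn 𝕜 s (fun x => 2 * A x - y) :=
    (hA.smul zero_le_two).sub (concaveOn_const y hA.1)
  exact h_left.sup h_right

theorem stmt_13_general (hs : Convex 𝕜 s) (t : Finset ι) {A B : ι → E → 𝕜}
    (hA : ∀ i ∈ t, ConvexOn 𝕜 s (A i)) (hB : ∀ i ∈ t, ConvexOn 𝕜 s (B i)) (f : ι → 𝕜) :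
    (∀ x, ∑ i ∈ t, |f i - (A i x - B i x)| =
      (∑ i ∈ t, max (f i + 2 * B i x) (2 * A i x - f i)) - ∑ i ∈ t, (A i x + B i x)) ∧
    ConvexOn 𝕜 s (fun x => ∑ i ∈ t, max (f i + 2 * B i x) (2 * A i x - f i)) ∧
    ConvexOn 𝕜 s (fun x => ∑ i ∈ t, (A i x + B i x)) := by
  refine ⟨fun x => ?_,
    convexOn_sum hs fun i hi => convexOn_max_add_two_mul_sub (hA i hi) (hB i hi) (f i),
    convexOn_sum hs fun i hi => (hA i hi).add (hB i hi)⟩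
  simp only [abs_sub_sub_eq_max_sub_add, Finset.sum_sub_distrib]

end OrderedRing

section ReLU

variable {V ι : Type*} [SeminormedAddCommGroup V] [InnerProductSpace ℝ V]

theorem convexOn_max_zero_inner (u : V) :
    ConvexOn ℝ Set.univ (fun v : V => max 0 ⟪v, u⟫) :=
  (convexOn_const 0 convex_univ).sup (((innerₗ V).flip u).convexOn convex_univ)

theorem convexOn_sum_max_zero_inner_s13 [Fintype ι] (u : V) :
    ConvexOn ℝ Set.univ (fun v : ι → V => ∑ j, max 0 ⟪v j, u⟫) :=
  convexOn_sum convex_univ fun j _ =>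
    (convexOn_max_zero_inner u).comp_linearMap (LinearMap.proj (φ := fun _ : ι => V) j)

end ReLU

/-- the Manhattan (L1) loss
`p₁(w) = ∑_i |f_i - (∑_j max{0,⟨a_j,T_i⟩} - ∑_j max{0,⟨b_j,T_i⟩})|` equals
`(∑_i g_i) - (∑_i h_i)` with both sums convex; in particular `p₁` is DC. -/
theorem stmt_13 (d n N : ℕ) (hd : 0 < d) (hn : 0 < n) (hN : 0 < N)
    (T : Fin N → EuclideanSpace ℝ (Fin d)) (f : Fin N → ℝ) :
    (∀ w : Wt d n,
      ∑ i, |f i - ((∑ j, max 0 ⟪w.1 j, T i⟫) - ∑ j, max 0 ⟪w.2 j, T i⟫)| =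
        (∑ i, gFun T f i w) - ∑ i, hFun T i w) ∧
    ConvexOn ℝ Set.univ (fun w : Wt d n => ∑ i, gFun T f i w) ∧
    ConvexOn ℝ Set.univ (fun w : Wt d n => ∑ i, hFun T i w) :=
  stmt_13_general convex_univ Finset.univ
    (fun i _ => (convexOn_sum_max_zero_inner_s13 (T i)).comp_linearMap (.fst ℝ _ _))
    (fun i _ => (convexOn_sum_max_zero_inner_s13 (T i)).comp_linearMap (.snd ℝ _ _)) f
end
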